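/- arXiv:1812.11213 — 3 statements merged into one kernel-verified Lean document; each statement's English description precedes it below -/
import Mathlib

section
/- For every flag 𝓕 of V and all integers q, r ≥ 1, n_qr = n_rq, i.e. dim (V_q ∩ V_{r−1}^⊥)/(V_q ∩ V_r^⊥ + V_{q−1} ∩ V_{r−1}^⊥) = dim (V_r ∩ V_{q−1}^⊥)/(V_r ∩ V_q^⊥ + V_{r−1} ∩ V_{q−1}^⊥). -/
/-!
For subspaces `A` and `C`, let `ρ(A, C)` be the rank of the pairing `A × C → K` induced by the
form. Row rank equals column rank, so `ρ` is symmetric up to flipping the form, and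
`dim (A ∩ C^⊥) = dim A - ρ(A, C)`. Since `V_q ∩ V_r^⊥` and `V_{q-1} ∩ V_{r-1}^⊥` meet in
`V_{q-1} ∩ V_r^⊥`, all the dimensions of the `V_i` cancel and `n_qr` is the mixed second difference
`ρ(V_q, V_r) - ρ(V_{q-1}, V_r) - ρ(V_q, V_{r-1}) + ρ(V_{q-1}, V_{r-1})`, which is symmetric in
`q` and `r`.
-/

open Module

/-- The orthogonal complement of a subspace `L` with respect to a bilinear form `b`:
`L^⊥ = {v ∈ V | b(v,w) = 0 for all w ∈ L}`. -/
def perp {K V : Type*} [Field K] [AddCommGroup V] [Module K V]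
    (B : V →ₗ[K] V →ₗ[K] K) (L : Submodule K V) : Submodule K V where
  carrier := {v | ∀ w ∈ L, B v w = 0}
  add_mem' := by
    intro a b ha hb w hw
    simp [map_add, LinearMap.add_apply, ha w hw, hb w hw]
  zero_mem' := by
    intro w hw
    simp
  smul_mem' := by
    intro c a ha w hw
    simp [map_smul, LinearMap.smul_apply, ha w hw]

/-- `n_qr`: the dimension of the quotient
`Φ_qr = (V_q ∩ V_{r−1}^⊥)/(V_q ∩ V_r^⊥ + V_{q−1} ∩ V_{r−1}^⊥)`. -/
noncomputable def nqr {K V : Type*} [Field K] [AddCommGroup V] [Module K V]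
    (B : V →ₗ[K] V →ₗ[K] K) (Vf : ℕ → Submodule K V) (q r : ℕ) : ℕ :=
  Module.finrank K
    (↥(Vf q ⊓ perp B (Vf (r - 1))) ⧸
      Submodule.comap (Vf q ⊓ perp B (Vf (r - 1))).subtype
        (Vf q ⊓ perp B (Vf r) ⊔ Vf (q - 1) ⊓ perp B (Vf (r - 1))))

section

variable {K V : Type*} [Field K] [AddCommGroup V] [Module K V]

theorem finrank_range_flip {M N : Type*} [AddCommGroup M] [Module K M] [AddCommGroup N]
    [Module K N] [FiniteDimensional K N] (f : M →ₗ[K] N →ₗ[K] K) :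
    finrank K (LinearMap.range f.flip) = finrank K (LinearMap.range f) := by
  have hflip : f.flip = f.dualMap ∘ₗ (evalEquiv K N).toLinearMap := rfl
  rw [hflip, LinearMap.range_comp_of_range_eq_top _ (LinearEquiv.range _),
    LinearMap.finrank_range_dualMap_eq_finrank_range]

theorem finrank_quotient_sup_add_finrank_add_finrank {P Q X : Submodule K V}
    [FiniteDimensional K X] (hP : P ≤ X) (hQ : Q ≤ X) :
    finrank K (X ⧸ (P ⊔ Q).submoduleOf X) + finrank K P + finrank K Q =
      finrank K X + finrank K ↥(P ⊓ Q) := by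
  have := Submodule.finiteDimensional_of_le hP
  have := Submodule.finiteDimensional_of_le hQ
  have h_quotient := Submodule.finrank_quotient_add_finrank ((P ⊔ Q).submoduleOf X)
  rw [(Submodule.submoduleOfEquivOfLe (sup_le hP hQ)).finrank_eq] at h_quotient
  have h_sup := Submodule.finrank_sup_add_finrank_inf_eq P Q
  omega

variable (B : V →ₗ[K] V →ₗ[K] K)

theorem perp_antitone : Antitone (perp B) :=
  fun _ _ hle _ hv w hw ↦ hv w (hle hw)

/-- The rank of the restriction of the bilinear form `B` to `A × C`, encoded as the rank of the
induced map `A → Dual K C`. -/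
noncomputable def pairingRank (A C : Submodule K V) : ℕ :=
  finrank K (LinearMap.range (B.domRestrict₁₂ A C))

theorem pairingRank_flip (A C : Submodule K V) [FiniteDimensional K C] :
    pairingRank B.flip C A = pairingRank B A C :=
  finrank_range_flip (B.domRestrict₁₂ A C)

theorem ker_domRestrict₁₂ (A C : Submodule K V) :
    LinearMap.ker (B.domRestrict₁₂ A C) = (perp B C).submoduleOf A := by
  ext v
  exact ⟨fun hv w hw ↦ LinearMap.congr_fun hv ⟨w, hw⟩, fun hv ↦ LinearMap.ext fun w ↦ hv w w.2⟩

theorem pairingRank_add_finrank_inf_perp (A C : Submodule K V) [FiniteDimensional K A] :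
    pairingRank B A C + finrank K ↥(A ⊓ perp B C) = finrank K A := by
  have h_ker : finrank K ((perp B C).submoduleOf A) = finrank K ↥(A ⊓ perp B C) := by
    rw [Submodule.submoduleOf, ← Submodule.map_comap_subtype,
      Submodule.finrank_map_subtype_eq]
  rw [← h_ker, ← ker_domRestrict₁₂]
  exact (B.domRestrict₁₂ A C).finrank_range_add_finrank_ker

/-- The dimension of `(A ∩ C'^⊥) / (A ∩ C^⊥ + A' ∩ C'^⊥)`, intended for subspaces `A' ≤ A` and
`C' ≤ C`. It is `n_qr` with one step `A' ≤ A` in place of `V_{q-1} ≤ V_q` and another,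
`C' ≤ C`, in place of `V_{r-1} ≤ V_r`. -/
noncomputable def stepDim (A' A C' C : Submodule K V) : ℕ :=
  finrank K (↥(A ⊓ perp B C') ⧸ (A ⊓ perp B C ⊔ A' ⊓ perp B C').submoduleOf (A ⊓ perp B C'))

theorem nqr_eq_stepDim (Vf : ℕ → Submodule K V) (q r : ℕ) :
    nqr B Vf q r = stepDim B (Vf (q - 1)) (Vf q) (Vf (r - 1)) (Vf r) :=
  rfl

variable {A' A C' C : Submodule K V}

theorem stepDim_add_pairingRank_add_pairingRank [FiniteDimensional K A]
    (hA : A' ≤ A) (hC : C' ≤ C) :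
    stepDim B A' A C' C + pairingRank B A' C + pairingRank B A C' =
      pairingRank B A C + pairingRank B A' C' := by
  have := Submodule.finiteDimensional_of_le hA
  have hperp : perp B C ≤ perp B C' := perp_antitone B hC
  have h_inf : (A ⊓ perp B C) ⊓ (A' ⊓ perp B C') = A' ⊓ perp B C := by
    rw [inf_inf_inf_comm, inf_eq_right.2 hA, inf_eq_left.2 hperp]
  have h_step : stepDim B A' A C' C + finrank K ↥(A ⊓ perp B C) + finrank K ↥(A' ⊓ perp B C') =
      finrank K ↥(A ⊓ perp B C') + finrank K ↥(A' ⊓ perp B C) := by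
    rw [← h_inf]
    exact finrank_quotient_sup_add_finrank_add_finrank
      (inf_le_inf_left A hperp) (inf_le_inf_right (perp B C') hA)
  have hAC := pairingRank_add_finrank_inf_perp B A C
  have hAC' := pairingRank_add_finrank_inf_perp B A C'
  have hA'C := pairingRank_add_finrank_inf_perp B A' C
  have hA'C' := pairingRank_add_finrank_inf_perp B A' C'
  omega

theorem statement4_general [FiniteDimensional K A] [FiniteDimensional K C]
    (hA : A' ≤ A) (hC : C' ≤ C) :
    stepDim B A' A C' C = stepDim B.flip C' C A' A := by
  have := Submodule.finiteDimensional_of_le hC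
  have h := stepDim_add_pairingRank_add_pairingRank B hA hC
  have h_flip := stepDim_add_pairingRank_add_pairingRank B.flip hC hA
  simp only [pairingRank_flip] at h_flip
  omega

end

/-- for every flag of V and q, r ≥ 1, n_qr = n_rq. -/
theorem statement4 {K V : Type*} [Field K] [AddCommGroup V] [Module K V]
    [FiniteDimensional K V] [CharP K 2] [PerfectField K]
    (B : V →ₗ[K] V →ₗ[K] K)
    (hsymm : ∀ u v : V, B u v = B v u)
    (hnd : ∀ v : V, (∀ w : V, B v w = 0) → v = 0)
    (Vf : ℕ → Submodule K V) (hbot : Vf 0 = ⊥) (hmono : Monotone Vf)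
    (htop : ∃ N, ∀ q, N ≤ q → Vf q = ⊤)
    (q r : ℕ) (hq : 1 ≤ q) (hr : 1 ≤ r) :
    nqr B Vf q r = nqr B Vf r q := by
  have hflip : B.flip = B := LinearMap.ext₂ fun u v ↦ hsymm v u
  rw [nqr_eq_stepDim, nqr_eq_stepDim,
    statement4_general B (hmono (Nat.sub_le q 1)) (hmono (Nat.sub_le r 1)), hflip]
end

section
/- Let U be a nonzero proper subspace of V, let l = codim_V U, r = dim(U ∩ U^⊥), and t = codim_{s(V,b)} N_{s(V,b)}(U). Then t = l(n − l) − r(r − 1)/2; equivalently, l + t − n = (l − 1)(n − l) − r(r − 1)/2. -/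
open Module

/-- The Lie algebra `s(V,b)` of endomorphisms preserving the bilinear form `b`
(in characteristic 2, self-adjoint endomorphisms), as a subspace of `End K V`. -/
def sAdj {K V : Type*} [Field K] [AddCommGroup V] [Module K V]
    (B : V →ₗ[K] V →ₗ[K] K) : Submodule K (Module.End K V) where
  carrier := {A | ∀ u v : V, B (A u) v = B u (A v)}
  add_mem' := by
    intro A C hA hC u v
    simp [LinearMap.add_apply, map_add, hA u v, hC u v]
  zero_mem' := by
    intro u v
    simp
  smul_mem' := by
    intro c A hA u v
    simp [LinearMap.smul_apply, map_smul, hA u v]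

/-- Endomorphisms of V leaving the subspace U stable. -/
def stab {K V : Type*} [Field K] [AddCommGroup V] [Module K V]
    (U : Submodule K V) : Submodule K (Module.End K V) where
  carrier := {A | ∀ u ∈ U, A u ∈ U}
  add_mem' := by
    intro A C hA hC u hu
    simpa [LinearMap.add_apply] using U.add_mem (hA u hu) (hC u hu)
  zero_mem' := by
    intro u hu
    simp
  smul_mem' := by
    intro c A hA u hu
    simpa [LinearMap.smul_apply] using U.smul_mem c (hA u hu)

/-!
Since `B` is nondegenerate, `A ↦ B (A ·) ·` identifies the self-adjoint endomorphisms with the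
symmetric bilinear forms on `V`, and because `U^⊥⊥ = U` it identifies those stabilizing `U` with the
symmetric forms vanishing on `U × U^⊥`. So `t` is the dimension of the space of restrictions of
symmetric forms to `U × U^⊥`. A pairing on `U × U^⊥` is such a restriction if and only if it is
symmetric on `U ∩ U^⊥`, which amounts to `r² - r(r + 1)/2 = r(r - 1)/2` linear conditions on a space
of dimension `(n - l) l`.
-/

lemma choose_succ_two_add_choose_two (k : ℕ) : (k + 1).choose 2 + k.choose 2 = k * k := by
  have choose_succ_two (m : ℕ) : (m + 1).choose 2 = m + m.choose 2 := by
    rw [Nat.choose_succ_succ', Nat.choose_one_right]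
  induction k with
  | zero => rfl
  | succ k ih =>
    rw [choose_succ_two (k + 1)]
    linarith [choose_succ_two k]

section LinearAlgebra

variable {K V E : Type*} [Field K] [AddCommGroup V] [Module K V] [AddCommGroup E] [Module K E]

lemma exists_common_extension {U W : Submodule K V} (f : U →ₗ[K] E) (g : W →ₗ[K] E)
    (hfg : ∀ (u : U) (w : W), (u : V) = w → f u = g w) :
    ∃ φ : V →ₗ[K] E, (∀ u : U, φ u = f u) ∧ ∀ w : W, φ w = g w := by
  let F : V →ₗ.[K] E := ⟨U, f⟩
  let G : V →ₗ.[K] E := ⟨W, g⟩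
  obtain ⟨φ, hφ⟩ := (F.sup G hfg).toFun.exists_extend
  refine ⟨φ, fun u ↦ ?_, fun w ↦ ?_⟩
  · exact (LinearMap.congr_fun hφ ⟨u, le_sup_left (a := U) u.2⟩).trans
      ((LinearPMap.left_le_sup F G hfg).2 rfl).symm
  · exact (LinearMap.congr_fun hφ ⟨w, le_sup_right (a := U) w.2⟩).trans
      ((LinearPMap.right_le_sup F G hfg).2 rfl).symm

lemma finrank_map_add_finrank_inf_ker [FiniteDimensional K V] (f : V →ₗ[K] E)
    (p : Submodule K V) :
    finrank K (p.map f) + finrank K ↥(p ⊓ LinearMap.ker f) = finrank K p := by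
  rw [← LinearMap.finrank_range_add_finrank_ker (f.domRestrict p), LinearMap.range_domRestrict,
    LinearMap.ker_domRestrict, ← Submodule.finrank_map_subtype_eq p, Submodule.map_comap_subtype]

lemma finrank_comap_add_finrank_of_surjective [FiniteDimensional K V] {f : V →ₗ[K] E}
    (hf : Function.Surjective f) (q : Submodule K E) :
    finrank K (q.comap f) + finrank K E = finrank K q + finrank K V := by
  have hrange := LinearMap.finrank_range_add_finrank_ker f
  have hcomap := finrank_map_add_finrank_inf_ker f (q.comap f)
  rw [LinearMap.range_eq_top.2 hf, finrank_top] at hrange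
  rw [Submodule.map_comap_eq_of_surjective hf, inf_eq_right.2 (LinearMap.ker_le_comap f)] at hcomap
  omega

end LinearAlgebra

section SymmForms

variable (R M : Type*) [CommSemiring R] [AddCommMonoid M] [Module R M]

/-- The module of symmetric bilinear forms on `M`. -/
def symmForms : Submodule R (LinearMap.BilinForm R M) where
  carrier := {β | β.IsSymm}
  add_mem' := LinearMap.BilinForm.IsSymm.add
  zero_mem' := LinearMap.BilinForm.isSymm_zero
  smul_mem' c _ hβ := hβ.smul c

variable {R M}

/-- A symmetric bilinear form is determined by its Gram matrix in a basis, encoded as a function on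
unordered pairs of indices. -/
noncomputable def symmFormsEquivSym2 {ι : Type*} (e : Basis ι R M) :
    symmForms R M ≃ₗ[R] (Sym2 ι → R) where
  toFun β := Sym2.lift ⟨fun i j ↦ β.1 (e i) (e j), fun _ _ ↦ β.2.eq _ _⟩
  map_add' β γ := by ext ⟨i, j⟩; rfl
  map_smul' c β := by ext ⟨i, j⟩; rfl
  invFun f := ⟨e.constr R fun i ↦ e.constr R fun j ↦ f s(i, j),
    (LinearMap.BilinForm.isSymm_iff_basis e).2 fun i j ↦ by
      simp only [Basis.constr_basis, Sym2.eq_swap]⟩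
  left_inv β := Subtype.ext <| LinearMap.ext_basis e e fun i j ↦ by
    simp only [Basis.constr_basis, Sym2.lift_mk]
  right_inv f := by
    ext ⟨i, j⟩
    simp only [Basis.constr_basis, Sym2.lift_mk]

lemma finrank_symmForms [StrongRankCondition R] [Module.Free R M] [Module.Finite R M] :
    finrank R (symmForms R M) = (finrank R M + 1).choose 2 := by
  rw [(symmFormsEquivSym2 (Free.chooseBasis R M)).finrank_eq, finrank_fintype_fun_eq_card,
    Sym2.card, finrank_eq_card_chooseBasisIndex]

end SymmForms

section PairingPullback

variable {R M M' N N' : Type*} [CommSemiring R] [AddCommMonoid M] [Module R M]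
  [AddCommMonoid M'] [Module R M'] [AddCommMonoid N] [Module R N] [AddCommMonoid N'] [Module R N']

/-- The pullback of pairings `M × N → R` along `f` and `g`, that is `LinearMap.compl₁₂` as a linear
map in the pairing. -/
def pairingPullback (f : M' →ₗ[R] M) (g : N' →ₗ[R] N) :
    (M →ₗ[R] N →ₗ[R] R) →ₗ[R] (M' →ₗ[R] N' →ₗ[R] R) where
  toFun β := β.compl₁₂ f g
  map_add' _ _ := rfl
  map_smul' _ _ := rfl

lemma pairingPullback_surjective {f : M' →ₗ[R] M} {g : N' →ₗ[R] N} {f' : M →ₗ[R] M'}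
    {g' : N →ₗ[R] N'} (hf : f' ∘ₗ f = LinearMap.id) (hg : g' ∘ₗ g = LinearMap.id) :
    Function.Surjective (pairingPullback f g) := by
  intro β
  refine ⟨β.compl₁₂ f' g', ?_⟩
  change β.compl₁₂ (f' ∘ₗ f) (g' ∘ₗ g) = β
  rw [hf, hg, LinearMap.compl₁₂_id_id]

end PairingPullback

section PairingsSymmOnInf

variable {K V : Type*} [Field K] [AddCommGroup V] [Module K V]

/-- The pairings on `U × W` whose restriction to `U ∩ W` is a symmetric bilinear form. -/
def pairingsSymmOnInf (U W : Submodule K V) : Submodule K (U →ₗ[K] W →ₗ[K] K) :=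
  (symmForms K ↥(U ⊓ W)).comap
    (pairingPullback (Submodule.inclusion inf_le_left) (Submodule.inclusion inf_le_right))

lemma exists_mem_symmForms_pairingPullback_eq {U W : Submodule K V} {g : U →ₗ[K] W →ₗ[K] K}
    (hg : g ∈ pairingsSymmOnInf U W) :
    ∃ β ∈ symmForms K V, pairingPullback U.subtype W.subtype β = g := by
  obtain ⟨ρ, hρ⟩ := (U ⊓ W).subtype.exists_leftInverse_of_injective (U ⊓ W).ker_subtype
  have hρ_coe {v : V} (hvU : v ∈ U) (hvW : v ∈ W) : (ρ v : V) = v :=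
    congrArg Subtype.val (LinearMap.congr_fun hρ ⟨v, hvU, hvW⟩)
  let ρU : V →ₗ[K] U := Submodule.inclusion inf_le_left ∘ₗ ρ
  let ρW : V →ₗ[K] W := Submodule.inclusion inf_le_right ∘ₗ ρ
  obtain ⟨P, hPU, hPW⟩ := exists_common_extension LinearMap.id (ρU ∘ₗ W.subtype)
    fun u w huw ↦ Subtype.ext (huw.trans (hρ_coe (huw ▸ u.2) w.2).symm)
  obtain ⟨Q, hQU, hQW⟩ := exists_common_extension (ρW ∘ₗ U.subtype) LinearMap.id
    fun u w huw ↦ Subtype.ext ((hρ_coe u.2 (huw ▸ w.2)).trans huw)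
  have hg_symm (v w : V) : g (ρU v) (ρW w) = g (ρU w) (ρW v) := hg.eq (ρ v) (ρ w)
  -- The transpose makes the form symmetric; on `U × W` it contributes `g (ρ w) (ρ u)`, which the
  -- last term cancels.
  let β : LinearMap.BilinForm K V :=
    g.compl₁₂ P Q + (g.compl₁₂ P Q).flip - g.compl₁₂ ρU ρW
  have hβ (v w : V) : β v w = g (P v) (Q w) + g (P w) (Q v) - g (ρU v) (ρW w) := rfl
  refine ⟨β, ⟨fun v w ↦ ?_⟩, ?_⟩
  · rw [hβ, hβ, hg_symm, add_comm (g (P v) _)]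
  · ext u w
    calc β u w = g u w + g (ρU w) (ρW u) - g (ρU u) (ρW w) := by
          rw [hβ, hPU, hPW, hQU, hQW]; rfl
      _ = g u w := by rw [hg_symm, add_sub_cancel_right]

lemma map_symmForms_pairingPullback (U W : Submodule K V) :
    (symmForms K V).map (pairingPullback U.subtype W.subtype) = pairingsSymmOnInf U W := by
  refine le_antisymm ?_ fun g hg ↦ exists_mem_symmForms_pairingPullback_eq hg
  rintro _ ⟨β, hβ, rfl⟩
  exact ⟨fun x y ↦ hβ.eq (x : V) y⟩

lemma finrank_pairingsSymmOnInf_add_choose [FiniteDimensional K V] (U W : Submodule K V) :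
    finrank K (pairingsSymmOnInf U W) + (finrank K ↥(U ⊓ W)).choose 2 =
      finrank K U * finrank K W := by
  obtain ⟨f, hf⟩ := (Submodule.inclusion (inf_le_left : U ⊓ W ≤ U)).exists_leftInverse_of_injective
    (Submodule.ker_inclusion _ _ _)
  obtain ⟨g, hg⟩ := (Submodule.inclusion (inf_le_right : U ⊓ W ≤ W)).exists_leftInverse_of_injective
    (Submodule.ker_inclusion _ _ _)
  have hcomap := finrank_comap_add_finrank_of_surjective
    (V := U →ₗ[K] W →ₗ[K] K) (E := ↥(U ⊓ W) →ₗ[K] ↥(U ⊓ W) →ₗ[K] K)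
    (pairingPullback_surjective hf hg) (symmForms K _)
  simp only [finrank_symmForms, finrank_linearMap, finrank_self, mul_one] at hcomap
  have hsq := choose_succ_two_add_choose_two (finrank K ↥(U ⊓ W))
  rw [pairingsSymmOnInf]
  omega

end PairingsSymmOnInf

section SelfAdjoint

variable {K V : Type*} [Field K] [AddCommGroup V] [Module K V] {B : LinearMap.BilinForm K V}

lemma perp_eq_orthogonal (hB : B.IsSymm) (L : Submodule K V) : perp B L = B.orthogonal L := by
  ext v
  exact forall₂_congr fun w _ ↦ hB.eq_iff

lemma comp_mem_symmForms_iff (hB : B.IsSymm) (A : End K V) :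
    B ∘ₗ A ∈ symmForms K V ↔ A ∈ sAdj B :=
  LinearMap.BilinForm.isSymm_def.trans <| forall₂_congr fun u v ↦ by rw [hB.eq u]; rfl

variable [FiniteDimensional K V]

lemma map_compRight_sAdj (hB : B.IsSymm) (hB' : B.Nondegenerate) :
    (sAdj B).map (LinearMap.compRight K B) = symmForms K V := by
  refine le_antisymm ?_ fun β hβ ↦ ?_
  · rintro _ ⟨A, hA, rfl⟩
    exact (comp_mem_symmForms_iff hB A).2 hA
  · let A : End K V := LinearMap.BilinForm.symmCompOfNondegenerate β B hB'
    have hA : B ∘ₗ A = β :=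
      LinearMap.ext (LinearMap.BilinForm.comp_symmCompOfNondegenerate_apply β hB')
    exact ⟨A, (comp_mem_symmForms_iff hB A).1 (hA ▸ hβ), hA⟩

lemma ker_pairingPullback_comp_compRight (hB : B.IsSymm) (hB' : B.Nondegenerate)
    (U : Submodule K V) :
    LinearMap.ker (pairingPullback U.subtype (perp B U).subtype ∘ₗ LinearMap.compRight K B) =
      stab U := by
  have hperp : perp B (perp B U) = U := by
    rw [perp_eq_orthogonal hB, perp_eq_orthogonal hB,
      LinearMap.BilinForm.orthogonal_orthogonal hB' hB.isRefl]
  ext A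
  calc A ∈ LinearMap.ker _ ↔ ∀ u ∈ U, A u ∈ perp B (perp B U) := by
        rw [LinearMap.mem_ker, LinearMap.ext_iff₂, Subtype.forall]
        exact forall₂_congr fun u hu ↦ Subtype.forall
    _ ↔ A ∈ stab U := by rw [hperp]; rfl

theorem finrank_sAdj_add_choose (hB : B.IsSymm) (hB' : B.Nondegenerate) (U : Submodule K V) :
    finrank K (sAdj B) + (finrank K ↥(U ⊓ perp B U)).choose 2 =
      finrank K ↥(sAdj B ⊓ stab U) + finrank K U * (finrank K V - finrank K U) := by
  have hrank := finrank_map_add_finrank_inf_ker (E := U →ₗ[K] perp B U →ₗ[K] K)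
    (pairingPullback U.subtype (perp B U).subtype ∘ₗ LinearMap.compRight K B) (sAdj B)
  rw [Submodule.map_comp, map_compRight_sAdj hB hB', map_symmForms_pairingPullback,
    ker_pairingPullback_comp_compRight hB hB'] at hrank
  have hpairings := finrank_pairingsSymmOnInf_add_choose U (perp B U)
  have hperp : finrank K (perp B U) = finrank K V - finrank K U := by
    rw [perp_eq_orthogonal hB, LinearMap.BilinForm.finrank_orthogonal hB']
  rw [← hrank, add_right_comm, hpairings, hperp, add_comm]

end SelfAdjoint

theorem statement14_general {K V : Type*} [Field K] [AddCommGroup V] [Module K V]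
    [FiniteDimensional K V]
    (B : V →ₗ[K] V →ₗ[K] K)
    (hsymm : ∀ u v : V, B u v = B v u)
    (hnd : ∀ v : V, (∀ w : V, B v w = 0) → v = 0)
    (U : Submodule K V)
    (n l r t : ℕ)
    (hn : n = finrank K V)
    (hl : l = finrank K V - finrank K ↥U)
    (hr : r = finrank K ↥(U ⊓ perp B U))
    (ht : t = finrank K ↥(sAdj B) - finrank K ↥(sAdj B ⊓ stab U)) :
    t = l * (n - l) - r * (r - 1) / 2 := by
  have hB : LinearMap.BilinForm.IsSymm B := ⟨hsymm⟩
  have hB' : LinearMap.BilinForm.Nondegenerate B :=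
    hB.isRefl.nondegenerate_iff_separatingLeft.2 hnd
  have hdim := finrank_sAdj_add_choose hB hB' U
  have hnl : n - l = finrank K U := by
    have := U.finrank_le
    omega
  rw [← hl, ← hr, ← hnl, mul_comm] at hdim
  rw [← Nat.choose_two_right]
  omega

/-- for a nonzero proper subspace U of V, with l = codim U,
r = dim(U ∩ U^⊥), n = dim V and t = codim of N_{s(V,b)}(U) in s(V,b),
t = l(n − l) − r(r − 1)/2. -/
theorem statement14 {K V : Type*} [Field K] [AddCommGroup V] [Module K V]
    [FiniteDimensional K V] [CharP K 2] [PerfectField K]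
    (B : V →ₗ[K] V →ₗ[K] K)
    (hsymm : ∀ u v : V, B u v = B v u)
    (hnd : ∀ v : V, (∀ w : V, B v w = 0) → v = 0)
    (hna : ∃ v : V, B v v ≠ 0)
    (U : Submodule K V) (hUbot : U ≠ ⊥) (hUtop : U ≠ ⊤)
    (n l r t : ℕ)
    (hn : n = finrank K V)
    (hl : l = finrank K V - finrank K ↥U)
    (hr : r = finrank K ↥(U ⊓ perp B U))
    (ht : t = finrank K ↥(sAdj B) - finrank K ↥(sAdj B ⊓ stab U)) :
    t = l * (n - l) - r * (r - 1) / 2 :=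
  statement14_general B hsymm hnd U n l r t hn hl hr ht
end

section
/- Let U be a nonzero proper subspace of V, let l = codim_V U and t = codim_{s(V,b)} N_{s(V,b)}(U). Then l + t ≥ n, and equality l + t = n can hold only when l = 1. -/
/-!
A self-adjoint `A` preserving `U` also preserves `U^⊥`, so `A w ∈ U^⊥` for any `w ∈ U^⊥`.
Self-adjoint operators act transitively on nonzero vectors, hence for `w ≠ 0` the condition
`A w ∈ U^⊥` cuts out a subspace of codimension `dim U = n - l`; this gives `t ≥ n - l`. If `l ≥ 2`,
choose linearly independent `w, w' ∈ U^⊥` with `U` not contained in the line of `w`. A self-adjoint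
`A` with `A w = 0` can send `w'` to any vector orthogonal to `w`, in particular to one outside
`U^⊥`. Such an `A` does not preserve `U` although `A w ∈ U^⊥`, so the inequality is strict.
-/

open Module

section LinearAlgebra

variable {K E V : Type*} [DivisionRing K] [AddCommGroup E] [Module K E]
  [AddCommGroup V] [Module K V]

lemma finrank_inf_comap_add_finrank_of_map_eq_top [FiniteDimensional K E] [FiniteDimensional K V]
    {f : E →ₗ[K] V} {S : Submodule K E} (hf : S.map f = ⊤) (W : Submodule K V) :
    finrank K ↥(S ⊓ W.comap f) + finrank K V = finrank K S + finrank K W := by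
  let g : S →ₗ[K] V ⧸ W := W.mkQ ∘ₗ f ∘ₗ S.subtype
  have hrange : LinearMap.range g = ⊤ := by
    simp only [g, LinearMap.range_comp, Submodule.range_subtype, hf, Submodule.map_top,
      Submodule.range_mkQ]
  have hker : (LinearMap.ker g).map S.subtype = S ⊓ W.comap f := by
    rw [LinearMap.ker_comp, Submodule.ker_mkQ, Submodule.comap_comp, Submodule.map_comap_subtype]
  have hrank := g.finrank_range_add_finrank_ker
  rw [hrange, finrank_top, ← Submodule.finrank_map_subtype_eq, hker] at hrank
  have hquot := W.finrank_quotient_add_finrank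
  omega

lemma not_le_span_singleton_of_one_lt_finrank {W : Submodule K V} (hW : 1 < finrank K W) (x : V) :
    ¬ W ≤ K ∙ x := fun h ↦ by
  have hle := Submodule.finrank_mono h
  have hspan := finrank_span_le_card (R := K) ({x} : Set V)
  simp only [Set.toFinset_singleton, Finset.card_singleton] at hspan
  omega

lemma notMem_span_singleton_symm {x y : V} (hx : x ≠ 0) (h : y ∉ K ∙ x) : x ∉ K ∙ y := fun hxy ↦
  h <| by
    simpa using mem_span_insert_exchange (s := ∅) (by simpa using hxy) (by simpa using hx)

end LinearAlgebra

section SelfAdjoint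

variable {K V : Type*} [Field K] [AddCommGroup V] [Module K V] {B : LinearMap.BilinForm K V}

lemma finrank_perp [FiniteDimensional K V] (hB : B.IsSymm) (hnd : B.Nondegenerate)
    (L : Submodule K V) : finrank K (perp B L) = finrank K V - finrank K L := by
  rw [perp_eq_orthogonal hB, LinearMap.BilinForm.finrank_orthogonal hnd]

lemma exists_mem_perp_apply_eq_one [FiniteDimensional K V] (hnd : B.Nondegenerate)
    {L : Submodule K V} {x : V} (hx : x ∉ L) : ∃ y ∈ perp B L, B y x = 1 := by
  obtain ⟨f, hfx, hfL⟩ := Submodule.exists_le_ker_of_notMem hx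
  refine ⟨(B.toDual hnd).symm ((f x)⁻¹ • f), fun z hz ↦ ?_, ?_⟩
  · have hfz : f z = 0 := hfL hz
    simp [hfz]
  · simp [hfx]

lemma smulRight_self_mem_sAdj (hB : B.IsSymm) (x : V) : (B x).smulRight x ∈ sAdj B := fun u v ↦ by
  simp [hB.eq u x, mul_comm]

lemma smulRight_add_smulRight_mem_sAdj (hB : B.IsSymm) (x y : V) :
    (B x).smulRight y + (B y).smulRight x ∈ sAdj B := fun u v ↦ by
  simp only [LinearMap.add_apply, LinearMap.smulRight_apply, map_add, map_smul,
    LinearMap.smul_apply, smul_eq_mul, hB.eq u x, hB.eq u y]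
  ring

lemma exists_mem_sAdj_apply_eq [FiniteDimensional K V] (hB : B.IsSymm) (hnd : B.Nondegenerate)
    {L : Submodule K V} {v w : V} (hv : v ∈ perp B L) (hw : w ∉ L) :
    ∃ A ∈ sAdj B, (∀ x ∈ L, A x = 0) ∧ A w = v := by
  obtain ⟨y, hyL, hyw⟩ := exists_mem_perp_apply_eq_one hnd hw
  -- On `w` the first two summands add up to `B v w • y + v`; the third removes the multiple of `y`.
  refine ⟨(B v).smulRight y + (B y).smulRight v - B v w • (B y).smulRight y,
    sub_mem (smulRight_add_smulRight_mem_sAdj hB v y)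
      (Submodule.smul_mem _ _ (smulRight_self_mem_sAdj hB y)), fun x hx ↦ ?_, ?_⟩
  · simp [hv x hx, hyL x hx]
  · simp [hyw]

lemma map_applyₗ_sAdj_eq_top [FiniteDimensional K V] (hB : B.IsSymm) (hnd : B.Nondegenerate)
    {w : V} (hw : w ≠ 0) : (sAdj B).map (LinearMap.applyₗ w) = ⊤ := by
  refine eq_top_iff.2 fun v _ ↦ ?_
  obtain ⟨A, hA, -, hAw⟩ := exists_mem_sAdj_apply_eq (L := ⊥) (v := v) hB hnd
    (fun x hx ↦ by simp [(Submodule.mem_bot K).1 hx]) (by simpa using hw)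
  exact ⟨A, hA, hAw⟩

lemma apply_mem_perp_of_mem_stab {U : Submodule K V} {A : Module.End K V} (hA : A ∈ sAdj B)
    (hAU : A ∈ stab U) {w : V} (hw : w ∈ perp B U) : A w ∈ perp B U := fun u hu ↦
  (hA w u).trans (hw (A u) (hAU u hu))

lemma sAdj_inf_stab_le_inf_comap_applyₗ {U : Submodule K V} {w : V} (hw : w ∈ perp B U) :
    sAdj B ⊓ stab U ≤ sAdj B ⊓ (perp B U).comap (LinearMap.applyₗ w) := fun _ hA ↦
  ⟨hA.1, apply_mem_perp_of_mem_stab hA.1 hA.2 hw⟩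

lemma sAdj_inf_stab_lt_inf_comap_applyₗ [FiniteDimensional K V] (hB : B.IsSymm)
    (hnd : B.Nondegenerate) {U : Submodule K V} {w : V} (hw : w ∈ perp B U) (hU : ¬ U ≤ K ∙ w)
    (hperp : ¬ perp B U ≤ K ∙ w) :
    sAdj B ⊓ stab U < sAdj B ⊓ (perp B U).comap (LinearMap.applyₗ w) := by
  obtain ⟨u, hu, huw⟩ := SetLike.not_le_iff_exists.1 hU
  obtain ⟨w', hw', hww'⟩ := SetLike.not_le_iff_exists.1 hperp
  obtain ⟨v, hvw, hvu⟩ := exists_mem_perp_apply_eq_one hnd huw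
  obtain ⟨A, hA, hAspan, hAw'⟩ := exists_mem_sAdj_apply_eq hB hnd hvw hww'
  have hAw : A w = 0 := hAspan w (Submodule.mem_span_singleton_self w)
  refine SetLike.lt_iff_le_and_exists.2 ⟨sAdj_inf_stab_le_inf_comap_applyₗ hw, A,
    Submodule.mem_inf.2 ⟨hA, ?_⟩, fun hAstab ↦ ?_⟩
  · simp [hAw]
  · have hv : v ∈ perp B U := hAw' ▸ apply_mem_perp_of_mem_stab hA hAstab.2 hw'
    exact one_ne_zero (hvu.symm.trans (hv u hu))

lemma finrank_sAdj_inf_comap_applyₗ_add_finrank [FiniteDimensional K V] (hB : B.IsSymm)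
    (hnd : B.Nondegenerate) {w : V} (hw : w ≠ 0) (U : Submodule K V) :
    finrank K ↥(sAdj B ⊓ (perp B U).comap (LinearMap.applyₗ w)) + finrank K U =
      finrank K (sAdj B) := by
  have hcodim : finrank K ↥(sAdj B ⊓ (perp B U).comap (LinearMap.applyₗ w)) + finrank K V =
      finrank K (sAdj B) + finrank K (perp B U) :=
    finrank_inf_comap_add_finrank_of_map_eq_top (map_applyₗ_sAdj_eq_top hB hnd hw) (perp B U)
  have hperp := finrank_perp hB hnd U
  have hU := U.finrank_le
  omega

lemma finrank_add_finrank_sAdj_inf_stab_le [FiniteDimensional K V] (hB : B.IsSymm)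
    (hnd : B.Nondegenerate) {U : Submodule K V} (hU : U ≠ ⊤) :
    finrank K U + finrank K ↥(sAdj B ⊓ stab U) ≤ finrank K (sAdj B) := by
  have hperp : perp B U ≠ ⊥ := by
    rw [← Submodule.one_le_finrank_iff, finrank_perp hB hnd]
    have hlt := Submodule.finrank_lt hU
    omega
  obtain ⟨w, hw, hw0⟩ := Submodule.exists_mem_ne_zero_of_ne_bot hperp
  have hle := Submodule.finrank_mono (sAdj_inf_stab_le_inf_comap_applyₗ hw)
  have hcodim := finrank_sAdj_inf_comap_applyₗ_add_finrank hB hnd hw0 U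
  omega

lemma finrank_add_finrank_sAdj_inf_stab_lt [FiniteDimensional K V] (hB : B.IsSymm)
    (hnd : B.Nondegenerate) {U : Submodule K V} (hU : U ≠ ⊥)
    (hcodim : 1 < finrank K V - finrank K U) :
    finrank K U + finrank K ↥(sAdj B ⊓ stab U) < finrank K (sAdj B) := by
  have hperp (x : V) : ¬ perp B U ≤ K ∙ x :=
    not_le_span_singleton_of_one_lt_finrank (by rwa [finrank_perp hB hnd]) x
  obtain ⟨u, hu, hu0⟩ := U.exists_mem_ne_zero_of_ne_bot hU
  obtain ⟨w, hw, hwu⟩ := SetLike.not_le_iff_exists.1 (hperp u)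
  have hUw : ¬ U ≤ K ∙ w := fun hle ↦ notMem_span_singleton_symm hu0 hwu (hle hu)
  have hw0 : w ≠ 0 := fun h ↦ hwu (h ▸ zero_mem _)
  have hlt := Submodule.finrank_lt_finrank_of_lt
    (sAdj_inf_stab_lt_inf_comap_applyₗ hB hnd hw hUw (hperp w))
  have hrank := finrank_sAdj_inf_comap_applyₗ_add_finrank hB hnd hw0 U
  omega

end SelfAdjoint

theorem statement16_general {K V : Type*} [Field K] [AddCommGroup V] [Module K V]
    [FiniteDimensional K V] {B : LinearMap.BilinForm K V} (hB : B.IsSymm) (hnd : B.Nondegenerate)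
    {U : Submodule K V} (hUbot : U ≠ ⊥) (hUtop : U ≠ ⊤) {n l t : ℕ} (hn : n = finrank K V)
    (hl : l = finrank K V - finrank K U)
    (ht : t = finrank K (sAdj B) - finrank K ↥(sAdj B ⊓ stab U)) :
    n ≤ l + t ∧ (l + t = n → l = 1) := by
  have hle := finrank_add_finrank_sAdj_inf_stab_le hB hnd hUtop
  have hlt := finrank_add_finrank_sAdj_inf_stab_lt hB hnd hUbot
  have hU := Submodule.finrank_lt hUtop
  omega

/-- Lemma 3.3(1): for a nonzero proper subspace U of V, with
l = codim U and t = codim of N_{s(V,b)}(U) in s(V,b), we have l + t ≥ n, and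
equality l + t = n can hold only when l = 1. -/
theorem statement16 {K V : Type*} [Field K] [AddCommGroup V] [Module K V]
    [FiniteDimensional K V] [CharP K 2] [PerfectField K]
    (B : V →ₗ[K] V →ₗ[K] K)
    (hsymm : ∀ u v : V, B u v = B v u)
    (hnd : ∀ v : V, (∀ w : V, B v w = 0) → v = 0)
    (hna : ∃ v : V, B v v ≠ 0)
    (U : Submodule K V) (hUbot : U ≠ ⊥) (hUtop : U ≠ ⊤)
    (n l t : ℕ)
    (hn : n = finrank K V)
    (hl : l = finrank K V - finrank K ↥U)
    (ht : t = finrank K ↥(sAdj B) - finrank K ↥(sAdj B ⊓ stab U)) :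
    n ≤ l + t ∧ (l + t = n → l = 1) := by
  have hB : LinearMap.BilinForm.IsSymm B := ⟨hsymm⟩
  exact statement16_general hB (hB.isRefl.nondegenerate_iff_separatingLeft.2 hnd)
    hUbot hUtop hn hl ht
end
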